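/- Distributivity of ⊙ over ⊕ fails for negotiation sets: there exist a nonempty universe X and negotiation sets A, B, C on X such that A ⊙ (B ⊕ C) ≠ (A ⊙ B) ⊕ (A ⊙ C). -/

import Mathlib

/-- Minimalization of necessities of negotiation sets (pairs with `A.1 ⊆ A.2`). -/
def odot {X : Type*} (A B : Set X × Set X) : Set X × Set X :=
  (A.1 ∩ B.1, A.2 ∪ B.2)

/-- Relative maximalization of necessities. -/
def oplus {X : Type*} (A B : Set X × Set X) : Set X × Set X :=
  ((A.1 ∪ B.1) ∩ (A.2 ∩ B.2), A.2 ∩ B.2)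

/-- distributivity of `⊙` over `⊕` fails: there are a nonempty
universe `X` and negotiation sets `A, B, C` on `X` with
`A ⊙ (B ⊕ C) ≠ (A ⊙ B) ⊕ (A ⊙ C)`. -/
theorem odot_not_distrib_oplus :
    ∃ (X : Type) (_ : Nonempty X) (A B C : Set X × Set X),
      A.1 ⊆ A.2 ∧ B.1 ⊆ B.2 ∧ C.1 ⊆ C.2 ∧
        odot A (oplus B C) ≠ oplus (odot A B) (odot A C) := by
  -- A point that is necessary in `A` and `B` but not even possible in `C` separates the two sides:
  -- `B ⊕ C` discards it, while `A ⊙ C` keeps it possible because of `A`, so the right side has it.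
  refine ⟨Unit, ⟨()⟩, (Set.univ, Set.univ), (Set.univ, Set.univ), (∅, ∅),
    subset_rfl, subset_rfl, subset_rfl, fun h => ?_⟩
  have h1 : () ∈ (oplus (odot (Set.univ, Set.univ) (Set.univ, Set.univ))
      (odot (Set.univ, Set.univ) ((∅ : Set Unit), ∅))).1 := by
    simp [odot, oplus]
  rw [← h] at h1
  simp [odot, oplus] at h1
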